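/- Define real sequences by α_1 = 1, β_1 = 0, k_1 = 2 and α_{i+1} = 2k_i, β_{i+1} = β_i + k_i − α_i, k_{i+1} = 4k_i − α_i for i ≥ 1. Then: (a) for all i ≥ 2, k_{i+1} = 4k_i − 2k_{i−1} and β_{i+1} = 2k_{i−1}; (b) α_i − β_i > 0 for all i; (c) k_{i+1}/k_i converges to 2 + √2 as i → ∞; (d) k_i/(α_i − β_i) converges to 1 + √2 as i → ∞; and (e) k_i/α_i converges to 1 + (√2)/2 as i → ∞. -/

import Mathlib

open Filter

noncomputable section

/-- The triple `(α_{n+1}, β_{n+1}, k_{n+1})` of exponents: `(α₁,β₁,k₁) = (1,0,2)`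
and `(α_{i+1}, β_{i+1}, k_{i+1}) = (2k_i, β_i + k_i - α_i, 4k_i - α_i)`. -/
def abk : ℕ → ℝ × ℝ × ℝ
  | 0 => (1, 0, 2)
  | n + 1 => (2 * (abk n).2.2, (abk n).2.1 + (abk n).2.2 - (abk n).1,
      4 * (abk n).2.2 - (abk n).1)

/-- `α_i` (for `i ≥ 1`). -/
def alphaS (i : ℕ) : ℝ := (abk (i - 1)).1
/-- `β_i` (for `i ≥ 1`). -/
def betaS (i : ℕ) : ℝ := (abk (i - 1)).2.1
/-- `k_i` (for `i ≥ 1`). -/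
def kS (i : ℕ) : ℝ := (abk (i - 1)).2.2

/-!
The gap `δ = α - β` satisfies `δ_{i+1} = δ_i + k_i`, and since `β_{i+1} = α_i` also
`k_{i+1} = δ_i + 3 k_i`. Hence both sequences stay positive, and `k` solves the recurrence with
characteristic roots `2 ± √2`, so that `k_{i+1} / k_i` converges to the dominant root `2 + √2`.
The other two limits follow from `δ_i / k_i = k_{i+1} / k_i - 3` and
`α_i / k_i = 4 - k_{i+1} / k_i`.
-/

section TwoTermRecurrence

theorem succ_sub_mul_eq_mul_pow_of_recurrence {R : Type*} [CommRing R] {u : ℕ → R} {r s : R}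
    (hu : ∀ n, u (n + 2) = (r + s) * u (n + 1) - r * s * u n) (n : ℕ) :
    u (n + 1) - s * u n = (u 1 - s * u 0) * r ^ n := by
  induction n with
  | zero => simp
  | succ n ih =>
    rw [hu, pow_succ]
    linear_combination r * ih

theorem sub_mul_eq_pow_sub_pow_of_recurrence {R : Type*} [CommRing R] {u : ℕ → R} {r s : R}
    (hu : ∀ n, u (n + 2) = (r + s) * u (n + 1) - r * s * u n) (n : ℕ) :
    (r - s) * u n = (u 1 - s * u 0) * r ^ n - (u 1 - r * u 0) * s ^ n := by
  have hu' : ∀ n, u (n + 2) = (s + r) * u (n + 1) - s * r * u n := fun n => by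
    rw [hu, add_comm r s, mul_comm r s]
  linear_combination succ_sub_mul_eq_mul_pow_of_recurrence hu n -
    succ_sub_mul_eq_mul_pow_of_recurrence hu' n

variable {𝕜 : Type*} [NormedField 𝕜] {u : ℕ → 𝕜} {r s : 𝕜}

theorem tendsto_div_pow_of_recurrence
    (hu : ∀ n, u (n + 2) = (r + s) * u (n + 1) - r * s * u n) (hsr : ‖s‖ < ‖r‖) :
    Tendsto (fun n => u n / r ^ n) atTop (nhds ((u 1 - s * u 0) / (r - s))) := by
  have hr : r ≠ 0 := norm_pos_iff.mp ((norm_nonneg s).trans_lt hsr)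
  have hrs : r - s ≠ 0 := sub_ne_zero.mpr fun h => hsr.ne (congrArg norm h.symm)
  have hpow : Tendsto (fun n => (s / r) ^ n) atTop (nhds 0) := by
    apply tendsto_pow_atTop_nhds_zero_of_norm_lt_one
    rwa [norm_div, div_lt_one (norm_pos_iff.mpr hr)]
  have hlim : Tendsto (fun n => ((u 1 - s * u 0) - (u 1 - r * u 0) * (s / r) ^ n) / (r - s))
      atTop (nhds ((u 1 - s * u 0) / (r - s))) := by
    simpa using ((hpow.const_mul (u 1 - r * u 0)).const_sub (u 1 - s * u 0)).div_const (r - s)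
  refine hlim.congr fun n => ?_
  rw [div_pow]
  field_simp
  linear_combination -sub_mul_eq_pow_sub_pow_of_recurrence hu n

theorem tendsto_succ_div_of_recurrence
    (hu : ∀ n, u (n + 2) = (r + s) * u (n + 1) - r * s * u n) (hsr : ‖s‖ < ‖r‖)
    (h₀ : u 1 ≠ s * u 0) :
    Tendsto (fun n => u (n + 1) / u n) atTop (nhds r) := by
  have hr : r ≠ 0 := norm_pos_iff.mp ((norm_nonneg s).trans_lt hsr)
  have hrs : r - s ≠ 0 := sub_ne_zero.mpr fun h => hsr.ne (congrArg norm h.symm)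
  have hc : (u 1 - s * u 0) / (r - s) ≠ 0 := div_ne_zero (sub_ne_zero.mpr h₀) hrs
  have hlim := tendsto_div_pow_of_recurrence hu hsr
  have hquot := (((tendsto_add_atTop_iff_nat 1).mpr hlim).const_mul r).div hlim hc
  rw [mul_div_cancel_right₀ r hc] at hquot
  refine hquot.congr fun n => ?_
  simp only [Pi.div_apply, pow_succ]
  field_simp

end TwoTermRecurrence

section ExponentRecursion

theorem alphaS_add_two (n : ℕ) : alphaS (n + 2) = 2 * kS (n + 1) := rfl

theorem betaS_add_two (n : ℕ) :
    betaS (n + 2) = betaS (n + 1) + kS (n + 1) - alphaS (n + 1) := rfl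

theorem kS_add_two (n : ℕ) : kS (n + 2) = 4 * kS (n + 1) - alphaS (n + 1) := rfl

theorem kS_add_three (n : ℕ) : kS (n + 3) = 4 * kS (n + 2) - 2 * kS (n + 1) := by
  rw [kS_add_two (n + 1), alphaS_add_two]

theorem betaS_add_two_eq_alphaS (n : ℕ) : betaS (n + 2) = alphaS (n + 1) := by
  induction n with
  | zero => norm_num [betaS, alphaS, abk]
  | succ n ih =>
    rw [betaS_add_two, ih, kS_add_two, alphaS_add_two]
    ring

theorem betaS_add_three (n : ℕ) : betaS (n + 3) = 2 * kS (n + 1) := by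
  rw [betaS_add_two_eq_alphaS (n + 1), alphaS_add_two]

theorem alphaS_sub_betaS_add_two (n : ℕ) :
    alphaS (n + 2) - betaS (n + 2) = (alphaS (n + 1) - betaS (n + 1)) + kS (n + 1) := by
  rw [alphaS_add_two, betaS_add_two]
  ring

theorem kS_add_two_eq_alphaS_sub_betaS (n : ℕ) :
    kS (n + 2) = (alphaS (n + 1) - betaS (n + 1)) + 3 * kS (n + 1) := by
  linear_combination kS_add_two n - betaS_add_two n + betaS_add_two_eq_alphaS n

theorem kS_pos_and_alphaS_sub_betaS_pos (n : ℕ) :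
    0 < kS (n + 1) ∧ 0 < alphaS (n + 1) - betaS (n + 1) := by
  induction n with
  | zero => norm_num [kS, alphaS, betaS, abk]
  | succ n ih =>
    obtain ⟨hk, hgap⟩ := ih
    rw [kS_add_two_eq_alphaS_sub_betaS, alphaS_sub_betaS_add_two]
    constructor <;> positivity

end ExponentRecursion

section ExponentLimits

theorem tendsto_kS_succ_div_kS :
    Tendsto (fun i => kS (i + 1) / kS i) atTop (nhds (2 + √2)) := by
  rw [← tendsto_add_atTop_iff_nat 1]
  have hsq : √2 * √2 = (2 : ℝ) := Real.mul_self_sqrt zero_le_two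
  have hpos : 0 < √(2 : ℝ) := Real.sqrt_pos.mpr zero_lt_two
  refine tendsto_succ_div_of_recurrence (u := fun n => kS (n + 1)) (s := 2 - √2)
    (fun n => ?_) ?_ ?_
  · linear_combination kS_add_three n - kS (n + 1) * hsq
  · rw [Real.norm_eq_abs, Real.norm_eq_abs, ← sq_lt_sq]
    nlinarith
  · have h₁ : kS 1 = 2 := rfl
    have h₂ : kS 2 = 7 := by norm_num [kS, abk]
    simp only [zero_add, Nat.reduceAdd, h₁, h₂]
    linarith

theorem tendsto_kS_div_alphaS_sub_betaS :
    Tendsto (fun i => kS i / (alphaS i - betaS i)) atTop (nhds (1 + √2)) := by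
  have hsq : √2 * √2 = (2 : ℝ) := Real.mul_self_sqrt zero_le_two
  have hmul : (2 + √2 - 3) * (1 + √2) = 1 := by linear_combination hsq
  have hlim := (tendsto_kS_succ_div_kS.sub_const 3).inv₀ (left_ne_zero_of_mul_eq_one hmul)
  rw [inv_eq_of_mul_eq_one_right hmul] at hlim
  rw [← tendsto_add_atTop_iff_nat 1] at hlim ⊢
  refine hlim.congr fun n => ?_
  have hk : kS (n + 1) ≠ 0 := (kS_pos_and_alphaS_sub_betaS_pos n).1.ne'
  rw [kS_add_two_eq_alphaS_sub_betaS, add_div, mul_div_cancel_right₀ _ hk, add_sub_cancel_right,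
    inv_div]

theorem tendsto_kS_div_alphaS :
    Tendsto (fun i => kS i / alphaS i) atTop (nhds (1 + √2 / 2)) := by
  have hsq : √2 * √2 = (2 : ℝ) := Real.mul_self_sqrt zero_le_two
  have hmul : (4 - (2 + √2)) * (1 + √2 / 2) = 1 := by linear_combination -hsq / 2
  have hlim := (tendsto_kS_succ_div_kS.const_sub 4).inv₀ (left_ne_zero_of_mul_eq_one hmul)
  rw [inv_eq_of_mul_eq_one_right hmul] at hlim
  rw [← tendsto_add_atTop_iff_nat 1] at hlim ⊢
  refine hlim.congr fun n => ?_
  have hk : kS (n + 1) ≠ 0 := (kS_pos_and_alphaS_sub_betaS_pos n).1.ne'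
  rw [kS_add_two, sub_div, mul_div_cancel_right₀ _ hk, sub_sub_cancel, inv_div]

end ExponentLimits

/-- Asymptotics of the exponent sequences:
(a) for `i ≥ 2`, `k_{i+1} = 4k_i - 2k_{i-1}` and `β_{i+1} = 2k_{i-1}`;
(b) `α_i - β_i > 0`;
(c) `k_{i+1}/k_i → 2 + √2`;
(d) `k_i/(α_i - β_i) → 1 + √2`;
(e) `k_i/α_i → 1 + √2/2`. -/
theorem statement18 :
    (∀ i : ℕ, 2 ≤ i → kS (i + 1) = 4 * kS i - 2 * kS (i - 1) ∧
        betaS (i + 1) = 2 * kS (i - 1)) ∧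
    (∀ i : ℕ, 1 ≤ i → 0 < alphaS i - betaS i) ∧
    Tendsto (fun i => kS (i + 1) / kS i) atTop (nhds (2 + Real.sqrt 2)) ∧
    Tendsto (fun i => kS i / (alphaS i - betaS i)) atTop (nhds (1 + Real.sqrt 2)) ∧
    Tendsto (fun i => kS i / alphaS i) atTop (nhds (1 + Real.sqrt 2 / 2)) := by
  refine ⟨fun i hi => ?_, fun i hi => ?_, tendsto_kS_succ_div_kS,
    tendsto_kS_div_alphaS_sub_betaS, tendsto_kS_div_alphaS⟩
  · obtain ⟨n, rfl⟩ := Nat.exists_eq_add_of_le' hi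
    exact ⟨kS_add_three n, betaS_add_three n⟩
  · obtain ⟨n, rfl⟩ := Nat.exists_eq_add_of_le' hi
    exact (kS_pos_and_alphaS_sub_betaS_pos n).2

end
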